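/- The sender–receiver system violates common knowledge: for every m ≥ 3, the trace set 𝕋_m of the sender–receiver system does not satisfy the formula φ_CK := ∀π∈sys. (F(r_π ∧ X r_π)) → F( fix(X, ξ₁, ξ₂). ∀π'∈X. F r_{π'} ), where ξ₁ := true → π∈X and ξ₂ := ∀π₁∈X. ∀π₂∈sys. (H(s_{π₁}↔s_{π₂}) ∨ H(r_{π₁}↔r_{π₂})) → π₂∈X. In particular, for the trace π = {s}{r}^{m−1}, at every time point i the fixpoint set contains the trace {s}^{m−1}{d}, which does not satisfy F r at i. -/

import Mathlib

/-!
The knowledge relation of `ξ₂` links two traces whenever the sender (via `s`) or the receiver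
(via `r`) cannot tell them apart. Writing `~ₛ` and `~ᵣ` for agreement on `s` and on `r` at all
positions, there is a chain inside `𝕋_m`
`{s}{r}^{m-1} ~ₛ {s}{d}{r}^{m-2} ~ᵣ {s}²{r}^{m-2} ~ₛ … ~ᵣ {s}^{m-1}{r} ~ₛ {s}^{m-1}{d}`:
the sender does not see whether delivery was delayed, and the receiver does not see when the
message was sent. Agreement at all positions implies the `H`-formulas at every time point, so
every set closed under `ξ₁, ξ₂` for `π = {s}{r}^{m-1}` contains `{s}^{m-1}{d}`
(`sdTr_mem_solSet`). This trace never satisfies `r` (`not_sat_F_r_sdTr`), while `π` satisfies the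
premise `F(r ∧ X r)` since `m ≥ 3`, which refutes `φ_CK`.
-/

namespace Hyper2LTLf

/-- A finite trace of length `m` over atomic propositions `AP`. -/
abbrev Trace (AP : Type) (m : ℕ) : Type := Fin m → Set AP

/-- Quantifier-free formulas (used as step formulas of fixpoint constraints). -/
inductive QF (AP : Type) : Type
  | atom : AP → ℕ → QF AP
  | neg  : QF AP → QF AP
  | conj : QF AP → QF AP → QF AP
  | nxt  : QF AP → QF AP
  | prv  : QF AP → QF AP
  | untl : QF AP → QF AP → QF AP
  | snce : QF AP → QF AP → QF AP

/-- The distinguished second-order variable `sys`. -/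
def sysVar : ℕ := 0

variable {AP : Type}

/-- Finite-trace satisfaction of quantifier-free formulas. -/
def SatQF {m : ℕ} : (ℕ → Trace AP m) → ℕ → QF AP → Prop
  | P, i, .atom a v => ∃ h : i < m, a ∈ P v ⟨i, h⟩
  | P, i, .neg φ => ¬ SatQF P i φ
  | P, i, .conj φ ψ => SatQF P i φ ∧ SatQF P i ψ
  | P, i, .nxt φ => i + 1 < m ∧ SatQF P (i + 1) φ
  | P, i, .prv φ => 0 < i ∧ SatQF P (i - 1) φ
  | P, i, .untl φ ψ =>
      ∃ j, i ≤ j ∧ j < m ∧ SatQF P j ψ ∧ ∀ k, i ≤ k → k < j → SatQF P k φ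
  | P, i, .snce φ ψ =>
      ∃ j, j ≤ i ∧ SatQF P j ψ ∧ ∀ k, j < k → k ≤ i → SatQF P k φ

/-- A fixpoint constraint `∀π₁∈X₁ … ∀πₙ∈Xₙ. φ_step → π ∈ X` for the set
variable `X` of the enclosing `fix`: `binders` is the list `(π₁,X₁),…,(πₙ,Xₙ)`,
`step` is the quantifier-free formula `φ_step`, and `target` is `π`. -/
structure Constraint (AP : Type) : Type where
  binders : List (ℕ × ℕ)
  step : QF AP
  target : ℕ

/-- Satisfaction of the universally quantified implication of a constraint, where
`X` is the set variable of the enclosing `fix` (the conclusion is `P π ∈ D X`). -/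
def SatBinders {m : ℕ} (D : ℕ → Set (Trace AP m)) (i : ℕ) (X : ℕ) :
    (ℕ → Trace AP m) → List (ℕ × ℕ) → QF AP → ℕ → Prop
  | P, [], step, tgt => SatQF P i step → P tgt ∈ D X
  | P, (v, Y) :: rest, step, tgt =>
      ∀ t ∈ D Y, SatBinders D i X (Function.update P v t) rest step tgt

/-- `Π, Δ, i ⊨_𝕋 ξ` for a fixpoint constraint `ξ` of the fix-variable `X`. -/
def SatConstraint {m : ℕ} (D : ℕ → Set (Trace AP m)) (i : ℕ) (X : ℕ)
    (P : ℕ → Trace AP m) (c : Constraint AP) : Prop :=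
  SatBinders D i X P c.binders c.step c.target

/-- `sol(Π,Δ,i,X,ξ₁,…,ξ_k)`: the ⊆-least subset `A` of `𝕋` with
`Π, Δ[X↦A], i ⊨_𝕋 ξ_j` for every `j`, as the intersection of all such subsets. -/
def solSet {m : ℕ} (T : Set (Trace AP m)) (P : ℕ → Trace AP m)
    (D : ℕ → Set (Trace AP m)) (i : ℕ) (X : ℕ) (cs : List (Constraint AP)) :
    Set (Trace AP m) :=
  ⋂₀ {A : Set (Trace AP m) | A ⊆ T ∧
        ∀ c ∈ cs, SatConstraint (Function.update D X A) i X P c}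

/-- Syntax of the extended logic Hyper²LTL_f with the `fix` construct. -/
inductive FormulaX (AP : Type) : Type
  | atom  : AP → ℕ → FormulaX AP
  | neg   : FormulaX AP → FormulaX AP
  | conj  : FormulaX AP → FormulaX AP → FormulaX AP
  | nxt   : FormulaX AP → FormulaX AP
  | prv   : FormulaX AP → FormulaX AP
  | untl  : FormulaX AP → FormulaX AP → FormulaX AP
  | snce  : FormulaX AP → FormulaX AP → FormulaX AP
  | exFO  : ℕ → ℕ → FormulaX AP → FormulaX AP   -- ∃ π ∈ X. φ
  | allFO : ℕ → ℕ → FormulaX AP → FormulaX AP   -- ∀ π ∈ X. φ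
  | exSO  : ℕ → FormulaX AP → FormulaX AP        -- ∃ X. φ
  | allSO : ℕ → FormulaX AP → FormulaX AP        -- ∀ X. φ
  | fix   : ℕ → List (Constraint AP) → FormulaX AP → FormulaX AP
      -- fix(X, ξ₁, …, ξ_k). φ

/-- Finite-trace satisfaction `Π, Δ, i ⊨_𝕋 φ` for the extended logic. -/
def SatX {m : ℕ} (T : Set (Trace AP m)) :
    (ℕ → Trace AP m) → (ℕ → Set (Trace AP m)) → ℕ → FormulaX AP → Prop
  | P, _, i, .atom a v => ∃ h : i < m, a ∈ P v ⟨i, h⟩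
  | P, D, i, .neg φ => ¬ SatX T P D i φ
  | P, D, i, .conj φ ψ => SatX T P D i φ ∧ SatX T P D i ψ
  | P, D, i, .nxt φ => i + 1 < m ∧ SatX T P D (i + 1) φ
  | P, D, i, .prv φ => 0 < i ∧ SatX T P D (i - 1) φ
  | P, D, i, .untl φ ψ =>
      ∃ j, i ≤ j ∧ j < m ∧ SatX T P D j ψ ∧ ∀ k, i ≤ k → k < j → SatX T P D k φ
  | P, D, i, .snce φ ψ =>
      ∃ j, j ≤ i ∧ SatX T P D j ψ ∧ ∀ k, j < k → k ≤ i → SatX T P D k φ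
  | P, D, i, .exFO v X φ => ∃ t ∈ D X, SatX T (Function.update P v t) D i φ
  | P, D, i, .allFO v X φ => ∀ t ∈ D X, SatX T (Function.update P v t) D i φ
  | P, D, i, .exSO X φ =>
      ∃ A : Set (Trace AP m), A ⊆ T ∧ SatX T P (Function.update D X A) i φ
  | P, D, i, .allSO X φ =>
      ∀ A : Set (Trace AP m), A ⊆ T → SatX T P (Function.update D X A) i φ
  | P, D, i, .fix X cs φ =>
      SatX T P (Function.update D X (solSet T P D i X cs)) i φ

/-- Top-level satisfaction: `𝕋 ⊨ φ` iff `∅, [sys ↦ 𝕋], 0 ⊨_𝕋 φ`. -/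
def ModelsX {m : ℕ} (T : Set (Trace AP m)) (φ : FormulaX AP) : Prop :=
  SatX T (fun _ _ => (∅ : Set AP)) (fun X => if X = sysVar then T else ∅) 0 φ

/-- Trace variables occurring in a quantifier-free formula. -/
def qfTV : QF AP → Set ℕ
  | .atom _ v => {v}
  | .neg φ => qfTV φ
  | .nxt φ => qfTV φ
  | .prv φ => qfTV φ
  | .conj φ ψ => qfTV φ ∪ qfTV ψ
  | .untl φ ψ => qfTV φ ∪ qfTV ψ
  | .snce φ ψ => qfTV φ ∪ qfTV ψ

/-- Free trace variables of a fixpoint constraint. -/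
def freeTVC (c : Constraint AP) : Set ℕ :=
  (qfTV c.step ∪ {c.target}) \ {v | ∃ p ∈ c.binders, p.1 = v}

/-- Set variables occurring in a fixpoint constraint (its binders). -/
def svC (c : Constraint AP) : Set ℕ := {Y | ∃ p ∈ c.binders, p.2 = Y}

/-- Free trace variables. -/
def freeTVX : FormulaX AP → Set ℕ
  | .atom _ v => {v}
  | .neg φ => freeTVX φ
  | .nxt φ => freeTVX φ
  | .prv φ => freeTVX φ
  | .conj φ ψ => freeTVX φ ∪ freeTVX ψ
  | .untl φ ψ => freeTVX φ ∪ freeTVX ψ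
  | .snce φ ψ => freeTVX φ ∪ freeTVX ψ
  | .exFO v _ φ => freeTVX φ \ {v}
  | .allFO v _ φ => freeTVX φ \ {v}
  | .exSO _ φ => freeTVX φ
  | .allSO _ φ => freeTVX φ
  | .fix _ cs φ => freeTVX φ ∪ {v | ∃ c ∈ cs, v ∈ freeTVC c}

/-- Free set variables. -/
def freeSVX : FormulaX AP → Set ℕ
  | .atom _ _ => ∅
  | .neg φ => freeSVX φ
  | .nxt φ => freeSVX φ
  | .prv φ => freeSVX φ
  | .conj φ ψ => freeSVX φ ∪ freeSVX ψ
  | .untl φ ψ => freeSVX φ ∪ freeSVX ψ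
  | .snce φ ψ => freeSVX φ ∪ freeSVX ψ
  | .exFO _ X φ => insert X (freeSVX φ)
  | .allFO _ X φ => insert X (freeSVX φ)
  | .exSO X φ => freeSVX φ \ {X}
  | .allSO X φ => freeSVX φ \ {X}
  | .fix X cs φ => (freeSVX φ ∪ {Y | ∃ c ∈ cs, Y ∈ svC c}) \ {X}

/-- A formula is closed if it has no free trace variables and its only
(possibly) free set variable is `sys`. -/
def ClosedX (φ : FormulaX AP) : Prop := freeTVX φ = ∅ ∧ freeSVX φ ⊆ {sysVar}

/-- `⊕`-monotonicity. -/
def PlusMonotoneX (φ : FormulaX AP) : Prop :=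
  ∀ (m : ℕ) (T T' : Set (Trace AP m)), T ⊆ T' → ModelsX T φ → ModelsX T' φ

/-- `⊖`-monotonicity. -/
def MinusMonotoneX (φ : FormulaX AP) : Prop :=
  ∀ (m : ℕ) (T T' : Set (Trace AP m)), T ⊆ T' → ¬ ModelsX T φ → ¬ ModelsX T' φ

/-- The atomic propositions of the sender–receiver example: `AP = {s, d, r}`. -/
inductive AP3 : Type
  | s | d | r
deriving DecidableEq

instance : Fintype AP3 :=
  ⟨⟨{AP3.s, AP3.d, AP3.r}, by decide⟩, by intro x; cases x <;> decide⟩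

/-- A quantifier-free formula that is true in every context. -/
def qtt : QF AP3 := .neg (.conj (.atom .s 0) (.neg (.atom .s 0)))

/-- Quantifier-free implication `φ → ψ := ¬(φ ∧ ¬ψ)`. -/
def qimpl (φ ψ : QF AP3) : QF AP3 := .neg (.conj φ (.neg ψ))

/-- Quantifier-free equivalence. -/
def qiff (φ ψ : QF AP3) : QF AP3 := .conj (qimpl φ ψ) (qimpl ψ φ)

/-- Quantifier-free disjunction. -/
def qor (φ ψ : QF AP3) : QF AP3 := .neg (.conj (.neg φ) (.neg ψ))

/-- Quantifier-free `historically`: `H φ := ¬(true S ¬φ)`. -/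
def qH (φ : QF AP3) : QF AP3 := .neg (.snce qtt (.neg φ))

/-- A formula of the extended logic that is true in every context. -/
def ttX : FormulaX AP3 := .neg (.conj (.atom .s 0) (.neg (.atom .s 0)))

/-- Eventually: `F φ := true U φ`. -/
def FX (φ : FormulaX AP3) : FormulaX AP3 := .untl ttX φ

/-- Implication `φ → ψ := ¬(φ ∧ ¬ψ)`. -/
def implX (φ ψ : FormulaX AP3) : FormulaX AP3 := .neg (.conj φ (.neg ψ))

/-- The fixpoint constraint `ξ₁ := true → π ∈ X`, with `π` the trace variable `0`
(bound by the outermost `∀π∈sys`). -/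
def xi1 : Constraint AP3 := ⟨[], qtt, 0⟩

/-- The fixpoint constraint
`ξ₂ := ∀π₁∈X. ∀π₂∈sys. (H(s_{π₁}↔s_{π₂}) ∨ H(r_{π₁}↔r_{π₂})) → π₂ ∈ X`,
with `π₁, π₂` the trace variables `2, 3` and `X` the set variable `1`. -/
def xi2 : Constraint AP3 :=
  ⟨[(2, 1), (3, sysVar)],
   qor (qH (qiff (.atom .s 2) (.atom .s 3))) (qH (qiff (.atom .r 2) (.atom .r 3))),
   3⟩

/-- The common-knowledge formula
`φ_CK := ∀π∈sys. (F(r_π ∧ X r_π)) → F( fix(X, ξ₁, ξ₂). ∀π'∈X. F r_{π'} )`,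
with `π, π'` the trace variables `0, 1` and `X` the set variable `1`. -/
def phiCK : FormulaX AP3 :=
  .allFO 0 sysVar
    (implX (FX (.conj (.atom .r 0) (.nxt (.atom .r 0))))
      (FX (.fix 1 [xi1, xi2] (.allFO 1 1 (FX (.atom .r 1))))))

/-- The trace `{s}^m`. -/
def sTr (m : ℕ) : Trace AP3 m := fun _ => {AP3.s}

/-- The trace `{s}^{m-1}{d}`. -/
def sdTr (m : ℕ) : Trace AP3 m := fun j => if (j : ℕ) = m - 1 then {AP3.d} else {AP3.s}

/-- The trace `{s}^a{r}^{m-a}`. -/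
def srTr (m a : ℕ) : Trace AP3 m := fun j => if (j : ℕ) < a then {AP3.s} else {AP3.r}

/-- The trace `{s}^a{d}{r}^{m-a-1}`. -/
def sdrTr (m a : ℕ) : Trace AP3 m :=
  fun j => if (j : ℕ) < a then {AP3.s} else if (j : ℕ) = a then {AP3.d} else {AP3.r}

/-- The set `𝕋_m` of traces of the sender–receiver system. -/
def srSys (m : ℕ) : Set (Trace AP3 m) :=
  {t | t = sTr m ∨ t = sdTr m ∨
       (∃ a, 1 ≤ a ∧ a ≤ m - 1 ∧ t = srTr m a) ∨
       (∃ a, 1 ≤ a ∧ a ≤ m - 2 ∧ t = sdrTr m a)}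

/-- Traces agreeing everywhere on `s`, or everywhere on `r`, satisfy the step formula of `ξ₂` at
every time point. -/
lemma satQF_step {m : ℕ} (P : ℕ → Trace AP3 m) (i : ℕ)
    (h : (∀ j, AP3.s ∈ P 2 j ↔ AP3.s ∈ P 3 j) ∨ (∀ j, AP3.r ∈ P 2 j ↔ AP3.r ∈ P 3 j)) :
    SatQF P i xi2.step := by
  rcases h with h | h
  · simp +contextual [xi2, qor, qH, qiff, qimpl, SatQF, h]
  · simp +contextual [xi2, qor, qH, qiff, qimpl, SatQF, h]

/-- One step along the knowledge relation stays inside every set satisfying `ξ₂`. -/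
lemma mem_of_xi2 {m : ℕ} {T A : Set (Trace AP3 m)} {P : ℕ → Trace AP3 m} {i : ℕ}
    (hA : SatConstraint (Function.update (fun X => if X = sysVar then T else ∅) 1 A) i 1 P xi2)
    {t u : Trace AP3 m} (ht : t ∈ A) (hu : u ∈ T)
    (h : (∀ j, AP3.s ∈ t j ↔ AP3.s ∈ u j) ∨ (∀ j, AP3.r ∈ t j ↔ AP3.r ∈ u j)) : u ∈ A := by
  have h1 := hA t (by simpa using ht) u (by simpa [sysVar] using hu)
  have h2 := h1 (satQF_step _ i (by simpa using h))
  simpa [xi2] using h2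

/-- The fixpoint set of `{s}{r}^{m-1}` contains `{s}^{m-1}{d}`: follow the chain through all
`{s}^a{r}^{m-a}`. -/
lemma sdTr_mem_solSet {m : ℕ} (hm : 3 ≤ m) (P : ℕ → Trace AP3 m) (hP : P 0 = srTr m 1) (i : ℕ) :
    sdTr m ∈ solSet (srSys m) P (fun X => if X = sysVar then srSys m else ∅) i 1 [xi1, xi2] := by
  rintro A ⟨-, hA⟩
  have h1 := hA xi1 (by simp)
  have h2 := hA xi2 (by simp)
  have h0 : srTr m 1 ∈ A := by
    have := h1 (by simp [xi1, qtt, SatQF])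
    simpa [xi1, hP] using this
  have chain : ∀ a, 1 ≤ a → a ≤ m - 1 → srTr m a ∈ A := by
    intro a ha
    induction a, ha using Nat.le_induction with
    | base => exact fun _ => h0
    | succ a ha ih =>
      intro hle
      have hd : sdrTr m a ∈ A := by
        refine mem_of_xi2 h2 (ih (by omega)) (.inr <| .inr <| .inr ⟨a, ha, by omega, rfl⟩) (.inl ?_)
        intro j
        simp only [srTr, sdrTr]
        split_ifs <;> simp
      refine mem_of_xi2 h2 hd (.inr <| .inr <| .inl ⟨a + 1, by omega, hle, rfl⟩) (.inr ?_)
      intro j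
      simp only [srTr, sdrTr]
      split_ifs <;> first | omega | simp
  refine mem_of_xi2 h2 (chain (m - 1) (by omega) le_rfl) (.inr <| .inl rfl) (.inl ?_)
  intro j
  have := j.isLt
  simp only [srTr, sdTr]
  split_ifs <;> first | omega | simp

lemma not_sat_F_r_sdTr {m : ℕ} (T : Set (Trace AP3 m)) (P : ℕ → Trace AP3 m)
    (D : ℕ → Set (Trace AP3 m)) (i : ℕ) (hP : P 1 = sdTr m) :
    ¬ SatX T P D i (FX (.atom .r 1)) := by
  rintro ⟨j, -, -, ⟨hj, hr⟩, -⟩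
  rw [hP] at hr
  simp only [sdTr] at hr
  split_ifs at hr <;> simp at hr

/-- the sender–receiver system violates common knowledge: for all
`m ≥ 3`, `𝕋_m ⊭ φ_CK`; in particular, for the trace `π = {s}{r}^{m-1}`, at every
time point `i < m` the fixpoint set contains the trace `{s}^{m-1}{d}`, which does
not satisfy `F r` at `i`. -/
theorem srSys_violates_CK :
    ∀ m : ℕ, 3 ≤ m →
      ¬ ModelsX (srSys m) phiCK ∧
      ∀ i : ℕ, i < m →
        sdTr m ∈ solSet (srSys m)
            (Function.update (fun _ _ => (∅ : Set AP3)) 0 (srTr m 1))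
            (fun X => if X = sysVar then srSys m else ∅) i 1 [xi1, xi2] ∧
        ¬ SatX (srSys m)
            (Function.update (Function.update (fun _ _ => (∅ : Set AP3)) 0 (srTr m 1))
              1 (sdTr m))
            (fun X => if X = sysVar then srSys m else ∅) i (FX (.atom .r 1)) := by
  intro m hm
  refine ⟨fun hmod => ?_, fun i _ => ⟨sdTr_mem_solSet hm _ (by simp) i,
    not_sat_F_r_sdTr _ _ _ i (by simp)⟩⟩
  refine hmod (srTr m 1) (.inr <| .inr <| .inl ⟨1, le_rfl, by omega, rfl⟩) ⟨?_, ?_⟩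
  · -- `r` holds at positions 1 and 2
    refine ⟨1, by omega, by omega, ⟨⟨by omega, ?_⟩, by omega, ⟨by omega, ?_⟩⟩, ?_⟩
    · simp [srTr]
    · simp [srTr]
    · simp [ttX, SatX]
  · rintro ⟨i, -, -, hfix, -⟩
    refine not_sat_F_r_sdTr _ _ _ i ?_ (hfix (sdTr m) ?_)
    · simp
    · rw [Function.update_self]
      exact sdTr_mem_solSet hm _ (by simp) i

end Hyper2LTLf
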